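/- For every integer m ≥ 2 and for every vertex labeling c : ℤ_{mp} → {1,…,m} of the circulant graph C(m,p) with p ≥ 2, there exists a nontrivial automorphism σ of C(m,p) such that c ∘ σ = c; in other words, no labeling of C(m,p) using at most m labels is distinguishing. -/

import Mathlib

/-!
The graph `C(m,p)` is the blow-up of the cycle on `ℤ_p`: whether `u` and `v` are adjacent depends
only on `u - v` modulo `p`, which has to be `1` or `-1` (`circC_adj_iff`). So every permutation that
changes all residues mod `p` by one common translation is an automorphism
(`isGraphAut_of_translate`).

Given a labeling `c` with `m` labels, consider `F v = (v mod p, c v) ∈ ℤ_p × {1,…,m}`. If `F` is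
not injective, transposing two vertices with the same image is an automorphism preserving `c`. If
`F` is injective, it is bijective because both sides have `mp` elements, and the translation
`(x, l) ↦ (x + 1, l)` pulled back along `F` is an automorphism preserving `c`; it is nontrivial
since `p ≥ 2`.
-/

/-- A permutation of the vertices is a graph automorphism if it preserves adjacency. -/
def IsGraphAut {V : Type*} (G : SimpleGraph V) (σ : Equiv.Perm V) : Prop :=
  ∀ u v : V, G.Adj (σ u) (σ v) ↔ G.Adj u v

/-- A labeling with `r` labels is distinguishing if no nontrivial automorphism preserves it. -/
def IsDistinguishing {V : Type*} (G : SimpleGraph V) {r : ℕ} (c : V → Fin r) : Prop :=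
  ∀ σ : Equiv.Perm V, IsGraphAut G σ → (∀ v, c (σ v) = c v) → σ = Equiv.refl V

/-- The distinguishing number of a graph: the least `r` admitting an `r`-distinguishing
labeling. -/
noncomputable def distinguishingNumber {V : Type*} (G : SimpleGraph V) : ℕ :=
  sInf {r : ℕ | ∃ c : V → Fin r, IsDistinguishing G c}

/-- The jump set `A = {p-1+r·p, p+1+r·p : 0 ≤ r ≤ m-1}` inside `ℤ_{mp}`. -/
def jumpSet (m p : ℕ) : Set (ZMod (m * p)) :=
  {a | ∃ r < m, a = ((p - 1 + r * p : ℕ) : ZMod (m * p)) ∨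
                a = ((p + 1 + r * p : ℕ) : ZMod (m * p))}

/-- The circulant graph `C(m,p)` on vertex set `ℤ_{mp}`: `i` and `j` are adjacent iff
`j - i (mod mp)` lies in the jump set. -/
def circC (m p : ℕ) : SimpleGraph (ZMod (m * p)) :=
  SimpleGraph.circulantGraph (jumpSet m p)

/-- The set `M_i = {i + r·p : 0 ≤ r ≤ m-1}` in `ℤ_{mp}`. -/
def Mset (m p i : ℕ) : Set (ZMod (m * p)) :=
  {v | ∃ r < m, v = ((i + r * p : ℕ) : ZMod (m * p))}

/-- Reduction modulo `p` on the vertices of `C(m,p)`. -/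
def redMod (m p : ℕ) : ZMod (m * p) →+* ZMod p :=
  ZMod.castHom (dvd_mul_left p m) (ZMod p)

lemma mem_jumpSet_iff {m p : ℕ} (hm : 2 ≤ m) (hp : 2 ≤ p) (a : ZMod (m * p)) :
    a ∈ jumpSet m p ↔ redMod m p a = -1 ∨ redMod m p a = 1 := by
  have hpos : 0 < m * p := by positivity
  have : NeZero (m * p) := ⟨hpos.ne'⟩
  have hval : ((a.val : ℕ) : ZMod (m * p)) = a := ZMod.natCast_zmod_val a
  have hlt : a.val < m * p := ZMod.val_lt a
  have hdm : p * (a.val / p) + a.val % p = a.val := Nat.div_add_mod _ _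
  have hq : a.val / p < m := Nat.div_lt_of_lt_mul (by linarith [mul_comm m p])
  have hra : redMod m p a = ((a.val : ℕ) : ZMod p) := by
    conv_lhs => rw [← hval]
    exact map_natCast _ _
  have hneg : (-1 : ZMod p) = ((p - 1 : ℕ) : ZMod p) := by
    rw [Nat.cast_sub (by omega)]; simp
  constructor
  · rintro ⟨r, -, h | h⟩
    · left
      rw [h, map_natCast, hneg]
      simp
    · right
      rw [h, map_natCast]
      simp
  · rintro (h | h)
    · rw [hra, hneg, ZMod.natCast_eq_natCast_iff', Nat.mod_eq_of_lt (by omega : p - 1 < p)] at h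
      refine ⟨a.val / p, hq, Or.inl ?_⟩
      conv_lhs => rw [← hval]
      congr 1
      rw [mul_comm (a.val / p) p]; omega
    · rw [hra, ← Nat.cast_one, ZMod.natCast_eq_natCast_iff',
        Nat.mod_eq_of_lt (by omega : 1 < p)] at h
      rcases Nat.eq_zero_or_pos (a.val / p) with h0 | h0
      · -- the jump `1` itself only appears as `p + 1 + (m - 1) * p = m * p + 1`
        refine ⟨m - 1, by omega, Or.inr ?_⟩
        obtain ⟨k, rfl⟩ : ∃ k, m = k + 1 := ⟨m - 1, by omega⟩
        rw [h0, mul_zero] at hdm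
        have e : p + 1 + (k + 1 - 1) * p = (k + 1) * p + a.val := by
          rw [Nat.add_sub_cancel, ← hdm, h]; ring
        rw [e, Nat.cast_add, ZMod.natCast_self, zero_add, hval]
      · refine ⟨a.val / p - 1, by omega, Or.inr ?_⟩
        conv_lhs => rw [← hval]
        congr 1
        obtain ⟨k, hk⟩ : ∃ k, a.val / p = k + 1 := ⟨a.val / p - 1, by omega⟩
        rw [hk, Nat.add_sub_cancel]
        rw [h, hk] at hdm
        linarith

lemma circC_adj_iff {m p : ℕ} (hm : 2 ≤ m) (hp : 2 ≤ p) (u v : ZMod (m * p)) :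
    (circC m p).Adj u v ↔
      redMod m p u - redMod m p v = -1 ∨ redMod m p u - redMod m p v = 1 := by
  have : Fact (1 < p) := ⟨by omega⟩
  have hflip : ∀ x y : ZMod p, (y - x = -1 ∨ y - x = 1) ↔ (x - y = -1 ∨ x - y = 1) := by
    intro x y
    rw [← neg_sub x y, neg_inj, neg_eq_iff_eq_neg, or_comm]
  rw [circC, SimpleGraph.circulantGraph_adj, mem_jumpSet_iff hm hp, mem_jumpSet_iff hm hp,
    map_sub, map_sub, hflip, or_self]
  refine and_iff_right_of_imp ?_
  rintro h rfl
  simp at h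

/-- A permutation that translates all residues mod `p` by the same amount is an automorphism. -/
lemma isGraphAut_of_translate {m p : ℕ} (hm : 2 ≤ m) (hp : 2 ≤ p)
    (σ : Equiv.Perm (ZMod (m * p))) (t : ZMod p)
    (h : ∀ v, redMod m p (σ v) = redMod m p v + t) : IsGraphAut (circC m p) σ := by
  intro u v
  rw [circC_adj_iff hm hp, circC_adj_iff hm hp, h, h, add_sub_add_right_eq_sub]

theorem stmt_19 (m p : ℕ) (hm : 2 ≤ m) (hp : 2 ≤ p) (c : ZMod (m * p) → Fin m) :
    ∃ σ : Equiv.Perm (ZMod (m * p)), IsGraphAut (circC m p) σ ∧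
      σ ≠ Equiv.refl (ZMod (m * p)) ∧ ∀ v, c (σ v) = c v := by
  have hpos : 0 < m * p := by positivity
  have : NeZero (m * p) := ⟨hpos.ne'⟩
  have : NeZero p := ⟨by omega⟩
  have : Fact (1 < p) := ⟨by omega⟩
  let F : ZMod (m * p) → ZMod p × Fin m := fun v => (redMod m p v, c v)
  by_cases hF : Function.Injective F
  · have hbij : Function.Bijective F := by
      rw [Fintype.bijective_iff_injective_and_card]
      refine ⟨hF, ?_⟩
      rw [Fintype.card_prod, ZMod.card, ZMod.card, Fintype.card_fin, mul_comm]
    let e : ZMod (m * p) ≃ ZMod p × Fin m := Equiv.ofBijective F hbij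
    let σ : Equiv.Perm (ZMod (m * p)) :=
      (e.trans ((Equiv.addRight (1 : ZMod p)).prodCongr (Equiv.refl (Fin m)))).trans e.symm
    have hσ : ∀ v, F (σ v) = (redMod m p v + 1, c v) := fun v => e.apply_symm_apply _
    have h1 : ∀ v, redMod m p (σ v) = redMod m p v + 1 := fun v => congrArg Prod.fst (hσ v)
    refine ⟨σ, isGraphAut_of_translate hm hp σ 1 h1, ?_, fun v => congrArg Prod.snd (hσ v)⟩
    intro h
    have := h1 0
    rw [h] at this
    simp at this
  · obtain ⟨a, b, hab, hne⟩ : ∃ a b, F a = F b ∧ a ≠ b := by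
      simpa [Function.Injective] using hF
    have hsw : ∀ v, F (Equiv.swap a b v) = F v := by
      intro v
      rcases eq_or_ne v a with rfl | ha
      · rw [Equiv.swap_apply_left, hab]
      rcases eq_or_ne v b with rfl | hb
      · rw [Equiv.swap_apply_right, hab]
      rw [Equiv.swap_apply_of_ne_of_ne ha hb]
    refine ⟨Equiv.swap a b, isGraphAut_of_translate hm hp _ 0 fun v => ?_, ?_,
      fun v => congrArg Prod.snd (hsw v)⟩
    · rw [add_zero]
      exact congrArg Prod.fst (hsw v)
    · exact fun h => hne (Equiv.swap_eq_refl_iff.mp h)
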